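/- Let k and l be integers and let ℤ² act on the abelian group ℤ² so that the first standard generator acts by (x, y) ↦ (x + k·y, y) and the second standard generator acts by (x, y) ↦ (x + l·y, y) (i.e., in the standard basis the generators act by the matrices [[1,k],[0,1]] and [[1,l],[0,1]]). Then the coinvariants (ℤ²)_{ℤ²} of this action are isomorphic to ℤ/gcd(k,l)ℤ × ℤ, via an isomorphism sending the class of (1,0) to the residue class of 1 in ℤ/gcd(k,l)ℤ and the class of (0,1) to the generator 1 of the ℤ-factor. -/

import Mathlib

/-!
Since `g h m - m = (g (h m) - h m) + (h m - m)`, and similarly for inverses, the relations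
`g m - m` coming from a generating family of the group span all of them. When the generators act on
`A × B` by `(x, y) ↦ (x + φ i y, y)`, these relations span `(⨆ i, range (φ i)) × 0`; for `φ` given
by multiplication by `k` and by `l` on `ℤ`, this is `(kℤ + lℤ) × 0 = gcd(k, l)ℤ × 0`.
-/

open Representation

section Coinvariants

variable {R Γ V : Type*} [CommRing R] [AddCommGroup V] [Module R V]

lemma coinvariants_ker_eq_iSup_range_sub_one [Group Γ] {ι : Type*} (ρ : Representation R Γ V)
    {γ : ι → Γ} (hγ : Subgroup.closure (Set.range γ) = ⊤) :
    Coinvariants.ker ρ = ⨆ i, LinearMap.range (ρ (γ i) - 1) := by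
  apply le_antisymm
  · suffices hmem : ∀ g v, ρ g v - v ∈ ⨆ i, LinearMap.range (ρ (γ i) - 1) from
      Submodule.span_le.2 (Set.range_subset_iff.2 fun gv ↦ hmem gv.1 gv.2)
    intro g v
    have hg : g ∈ Subgroup.closure (Set.range γ) := hγ ▸ Subgroup.mem_top g
    induction hg using Subgroup.closure_induction generalizing v with
    | mem _ h =>
      obtain ⟨i, rfl⟩ := h
      exact Submodule.mem_iSup_of_mem i ⟨v, rfl⟩
    | one => simp
    | mul g h _ _ ihg ihh =>
      have hgh : ρ (g * h) v - v = (ρ g (ρ h v) - ρ h v) + (ρ h v - v) := by simp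
      exact hgh ▸ add_mem (ihg (ρ h v)) (ihh v)
    | inv g _ ih =>
      have hinv : ρ g⁻¹ v - v = -(ρ g (ρ g⁻¹ v) - ρ g⁻¹ v) := by simp
      exact hinv ▸ neg_mem (ih (ρ g⁻¹ v))
  · refine iSup_le fun i ↦ ?_
    rintro _ ⟨v, rfl⟩
    exact Coinvariants.sub_mem_ker (γ i) v

variable [Monoid Γ]

lemma ker_coinvariants_mk_toAddMonoidHom (ρ : Representation R Γ V) :
    (Coinvariants.mk ρ).toAddMonoidHom.ker =
      AddSubgroup.closure {x : V | ∃ (m : V) (γ : Γ), x = m - ρ γ m} := by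
  apply le_antisymm
  · intro x hx
    refine Submodule.closure_induction (zero_mem _) (fun _ _ _ _ ↦ add_mem) ?_
      ((Coinvariants.mk_eq_zero ρ).1 hx)
    rintro r _ ⟨⟨γ, m⟩, rfl⟩
    exact AddSubgroup.subset_closure ⟨-(r • m), γ, by simp [smul_sub, neg_add_eq_sub]⟩
  · rw [AddSubgroup.closure_le]
    rintro _ ⟨m, γ, rfl⟩
    simp [AddMonoidHom.mem_ker]

/-- The coinvariants of a representation, presented as the quotient of the underlying abelian group
by the additive (rather than `R`-linear) span of the elements `m - ρ γ m`. -/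
noncomputable def coinvariantsAddEquiv (ρ : Representation R Γ V) :
    V ⧸ AddSubgroup.closure {x : V | ∃ (m : V) (γ : Γ), x = m - ρ γ m} ≃+ ρ.Coinvariants :=
  (QuotientAddGroup.quotientAddEquivOfEq (ker_coinvariants_mk_toAddMonoidHom ρ).symm).trans
    (QuotientAddGroup.quotientKerEquivOfSurjective _ (Coinvariants.mk_surjective ρ))

@[simp]
lemma coinvariantsAddEquiv_mk (ρ : Representation R Γ V) (v : V) :
    coinvariantsAddEquiv ρ (QuotientAddGroup.mk v) = Coinvariants.mk ρ v :=
  rfl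

end Coinvariants

section Unipotent

lemma range_sub_one_of_unipotent {R A B : Type*} [Ring R] [AddCommGroup A] [Module R A]
    [AddCommGroup B] [Module R B] {f : Module.End R (A × B)} {φ : B →ₗ[R] A}
    (hf : ∀ v, f v = (v.1 + φ v.2, v.2)) :
    LinearMap.range (f - 1) = (LinearMap.range φ).prod ⊥ := by
  have hsub : f - 1 = LinearMap.inl R A B ∘ₗ φ ∘ₗ LinearMap.snd R A B :=
    LinearMap.ext fun v ↦ by ext <;> simp [hf]
  rw [hsub, LinearMap.range_comp, LinearMap.range_comp_of_range_eq_top _ Submodule.range_snd,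
    Submodule.map_inl]

variable {R Γ A B C ι : Type*} [CommRing R] [Group Γ] [AddCommGroup A] [Module R A]
  [AddCommGroup B] [Module R B] [AddCommGroup C] [Module R C]

lemma coinvariants_ker_of_unipotent (ρ : Representation R Γ (A × B)) {γ : ι → Γ}
    (hγ : Subgroup.closure (Set.range γ) = ⊤) {φ : ι → B →ₗ[R] A}
    (hρ : ∀ i v, ρ (γ i) v = (v.1 + φ i v.2, v.2)) :
    Coinvariants.ker ρ = (⨆ i, LinearMap.range (φ i)).prod ⊥ := by
  simp only [coinvariants_ker_eq_iSup_range_sub_one ρ hγ, range_sub_one_of_unipotent (hρ _),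
    ← Submodule.map_inl, Submodule.map_iSup]

theorem coinvariants_unipotent_action_general (ρ : Representation R Γ (A × B)) {γ : ι → Γ}
    (hγ : Subgroup.closure (Set.range γ) = ⊤) {φ : ι → B →ₗ[R] A}
    (hρ : ∀ i v, ρ (γ i) v = (v.1 + φ i v.2, v.2)) {q : A →ₗ[R] C} (hq : Function.Surjective q)
    (hker : LinearMap.ker q = ⨆ i, LinearMap.range (φ i)) :
    ∃ e : ρ.Coinvariants ≃ₗ[R] C × B, ∀ v, e (Coinvariants.mk ρ v) = (q v.1, v.2) := by
  have hker' : Coinvariants.ker ρ = LinearMap.ker (q.prodMap (LinearMap.id (M := B))) := by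
    rw [coinvariants_ker_of_unipotent ρ hγ hρ, LinearMap.ker_prodMap, hker, LinearMap.ker_id]
  have hsurj : Function.Surjective (q.prodMap (LinearMap.id (M := B))) :=
    hq.prodMap Function.surjective_id
  exact ⟨(Submodule.quotEquivOfEq _ _ hker').trans (LinearMap.quotKerEquivOfSurjective _ hsurj),
    fun _ ↦ rfl⟩

lemma exists_coinvariants_linearEquiv_of_unipotent_pair (ρ : Representation R Γ (A × B)) {g h : Γ}
    (hgh : Subgroup.closure {g, h} = ⊤) {φ ψ : B →ₗ[R] A}
    (hg : ∀ v, ρ g v = (v.1 + φ v.2, v.2)) (hh : ∀ v, ρ h v = (v.1 + ψ v.2, v.2))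
    {q : A →ₗ[R] C} (hq : Function.Surjective q)
    (hker : LinearMap.ker q = LinearMap.range φ ⊔ LinearMap.range ψ) :
    ∃ e : ρ.Coinvariants ≃ₗ[R] C × B, ∀ v, e (Coinvariants.mk ρ v) = (q v.1, v.2) := by
  refine coinvariants_unipotent_action_general ρ (γ := fun b ↦ bif b then h else g)
    (φ := fun b ↦ bif b then ψ else φ) ?_ (Bool.forall_bool.2 ⟨hg, hh⟩) hq ?_
  · rw [Bool.range_eq]
    exact hgh
  · rw [hker, iSup_bool_eq, sup_comm]
    rfl

end Unipotent

lemma closure_ofAdd_one_zero_ofAdd_zero_one_eq_top :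
    Subgroup.closure {Multiplicative.ofAdd ((1 : ℤ), (0 : ℤ)), Multiplicative.ofAdd (0, 1)} =
      ⊤ := by
  refine (Subgroup.eq_top_iff' _).2 fun g ↦ Subgroup.mem_closure_pair.2
    ⟨g.toAdd.1, g.toAdd.2, Multiplicative.toAdd.injective ?_⟩
  ext <;> simp

lemma ker_intCast_zmod_gcd (k l : ℤ) :
    LinearMap.ker (Int.castAddHom (ZMod (Int.gcd k l))).toIntLinearMap =
      LinearMap.range (LinearMap.toSpanSingleton ℤ ℤ k) ⊔
        LinearMap.range (LinearMap.toSpanSingleton ℤ ℤ l) := by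
  have hker : (Int.castAddHom (ZMod (Int.gcd k l))).ker =
      AddSubgroup.zmultiples k ⊔ AddSubgroup.zmultiples l := by
    rw [ZMod.ker_intCastAddHom, Int.zmultiples_sup]
  simp only [AddMonoidHom.coe_toIntLinearMap_ker, hker, map_sup, AddSubgroup.zmultiples_eq_closure,
    AddSubgroup.toIntSubmodule_closure, LinearMap.range_toSpanSingleton]

/-- Let `k, l : ℤ` and let `ℤ²` act on `ℤ²` so that the first standard
generator acts by `(x, y) ↦ (x + k·y, y)` and the second by `(x, y) ↦ (x + l·y, y)`.
Then the coinvariants `(ℤ²)_{ℤ²}` are isomorphic to `ℤ/gcd(k,l)ℤ × ℤ`, via an isomorphism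
sending the class of `(1,0)` to `(1, 0)` and the class of `(0,1)` to `(0, 1)`.
(Here `ZMod 0 = ℤ`, so the case `gcd(k,l) = 0` is covered.) -/
theorem coinvariants_unipotent_action (k l : ℤ)
    (ρ : Representation ℤ (Multiplicative (ℤ × ℤ)) (ℤ × ℤ))
    (h1 : ∀ v : ℤ × ℤ, ρ (Multiplicative.ofAdd ((1 : ℤ), (0 : ℤ))) v = (v.1 + k * v.2, v.2))
    (h2 : ∀ v : ℤ × ℤ, ρ (Multiplicative.ofAdd ((0 : ℤ), (1 : ℤ))) v = (v.1 + l * v.2, v.2)) :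
    ∃ e : ((ℤ × ℤ) ⧸ AddSubgroup.closure {x : ℤ × ℤ |
        ∃ (m : ℤ × ℤ) (γ : Multiplicative (ℤ × ℤ)), x = m - ρ γ m}) ≃+
        (ZMod (Int.gcd k l) × ℤ),
      e (QuotientAddGroup.mk ((1 : ℤ), (0 : ℤ))) = ((1 : ZMod (Int.gcd k l)), (0 : ℤ)) ∧
      e (QuotientAddGroup.mk ((0 : ℤ), (1 : ℤ))) = ((0 : ZMod (Int.gcd k l)), (1 : ℤ)) := by
  obtain ⟨e, he⟩ := exists_coinvariants_linearEquiv_of_unipotent_pair ρ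
    closure_ofAdd_one_zero_ofAdd_zero_one_eq_top (by simpa [mul_comm] using h1)
    (by simpa [mul_comm] using h2) ZMod.intCast_surjective (ker_intCast_zmod_gcd k l)
  exact ⟨(coinvariantsAddEquiv ρ).trans e.toAddEquiv, by simp [he], by simp [he]⟩
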